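/- Convexity of the YMA rate in the cache size: Let n and N be positive integers with n ≤ N. The function R : [0,N) → ℝ defined by R(0) := n and R(M) := ((N−M)/M)·(1 − (1 − M/N)^n) for M ∈ (0,N) is convex on [0,N). (In the paper, n = N̄ = min(K,N) and R(M) = R_YMA(K,N,M); this convexity justifies upper-bounding R_YMA by its piecewise-linear interpolation through the corner points.) -/

import Mathlib

/-- **Convexity of the YMA rate in the cache size.** For positive integers `n ≤ N`,
the function `R : [0,N) → ℝ` with `R(0) = n` and
`R(M) = ((N−M)/M)·(1 − (1 − M/N)^n)` for `M ∈ (0,N)` is convex on `[0,N)`. -/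
theorem yma_rate_convex (n N : ℕ) (hn : 0 < n) (hnN : n ≤ N) :
    ConvexOn ℝ (Set.Ico (0 : ℝ) (N : ℝ))
      (fun M : ℝ =>
        if M = 0 then (n : ℝ)
        else ((N : ℝ) - M) / M * (1 - (1 - M / (N : ℝ)) ^ n)) := by
  have hN : (0 : ℝ) < N := by exact_mod_cast lt_of_lt_of_le hn hnN
  have key : (fun M : ℝ =>
        if M = 0 then (n : ℝ)
        else ((N : ℝ) - M) / M * (1 - (1 - M / (N : ℝ)) ^ n)) =
      fun M : ℝ => ∑ i ∈ Finset.range n, (1 - M / (N : ℝ)) ^ (i + 1) := by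
    funext M
    split_ifs with h
    · simp [h]
    · have hg := geom_sum_mul_neg (1 - M / (N : ℝ)) n
      simp only [pow_succ]
      rw [← Finset.sum_mul, ← hg]
      field_simp
      ring
  rw [key]
  refine ⟨convex_Ico _ _, ?_⟩
  intro x hx y hy a b ha hb hab
  simp only [smul_eq_mul]
  rw [Finset.mul_sum, Finset.mul_sum, ← Finset.sum_add_distrib]
  refine Finset.sum_le_sum fun i _ => ?_
  have hpos : ∀ z ∈ Set.Ico (0 : ℝ) (N : ℝ), 1 - z / (N : ℝ) ∈ Set.Ici (0 : ℝ) := by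
    intro z hz
    have : z / (N : ℝ) ≤ 1 := (div_le_one hN).2 hz.2.le
    simpa using this
  have h := (convexOn_pow (𝕜 := ℝ) (i + 1)).2 (hpos x hx) (hpos y hy) ha hb hab
  simp only [smul_eq_mul] at h
  have e : 1 - (a * x + b * y) / (N : ℝ) = a * (1 - x / N) + b * (1 - y / N) := by
    linear_combination -hab
  rw [e]
  exact h
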